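/- (Theorem 5.3, Liouville-type theorem) Let λ₀ : ℝ^N × ℝ → ℝ satisfy 0 < m ≤ λ₀ ≤ M, and let u be a nonnegative classical solution of the dead-core equation Δ_p u − ∂_t u = λ₀ u₊^q on all of ℝ^N × ℝ with ∂_t u ≥ 0 everywhere and u(0,0) = 0. Assume u(x,t) = o( max{‖x‖, |t|^{1/θ}}^{p/(p−q−1)} ) as max{‖x‖, |t|^{1/θ}} → ∞, i.e. for every ε > 0 there exists R > 0 such that u(x,t) ≤ ε · max{‖x‖, |t|^{1/θ}}^{p/(p−q−1)} whenever max{‖x‖, |t|^{1/θ}} ≥ R. Then u ≡ 0 on ℝ^N × ℝ. -/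

import Mathlib

noncomputable section

open Set Metric MeasureTheory

/-- Euclidean space `ℝ^N`. -/
abbrev Euc (N : ℕ) := EuclideanSpace ℝ (Fin N)

/-- `s₊^q`: equals `(max s 0)^q` if `s > 0` and `0` otherwise. -/
def plusPowQ (q s : ℝ) : ℝ := if 0 < s then (max s 0) ^ q else 0

/-- The spatial gradient `∇u(x,t)`. -/
def spatialGrad (N : ℕ) (u : Euc N × ℝ → ℝ) (z : Euc N × ℝ) : Euc N :=
  gradient (fun y => u (y, z.2)) z.1

/-- The vector field `V(y,t) = ‖∇u(y,t)‖^(p-2) ∇u(y,t)`. -/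
def pVF (N : ℕ) (p : ℝ) (u : Euc N × ℝ → ℝ) (z : Euc N × ℝ) : Euc N :=
  ‖spatialGrad N u z‖ ^ (p - 2) • spatialGrad N u z

/-- The `p`-Laplacian `Δ_p u` realized as `trace (D_x V)` with `V = ‖∇u‖^(p-2)∇u`. -/
def pLap (N : ℕ) (p : ℝ) (u : Euc N × ℝ → ℝ) (z : Euc N × ℝ) : ℝ :=
  LinearMap.trace ℝ (Euc N) (fderiv ℝ (fun y => pVF N p u (y, z.2)) z.1).toLinearMap

/-- The time derivative `∂ₜ u`. -/
def timeDeriv (N : ℕ) (u : Euc N × ℝ → ℝ) (z : Euc N × ℝ) : ℝ :=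
  deriv (fun t => u (z.1, t)) z.2

/-- `u` is a classical solution of the dead-core equation `Δ_p u - ∂_t u = λ₀ u₊^q` on `D`:
`u` is continuous on `D` and at every point of `D` the spatial gradient and time derivative
exist, `V = ‖∇u‖^(p-2)∇u` is spatially differentiable, and the PDE holds. -/
def IsDCSol (N : ℕ) (p q : ℝ) (lam u : Euc N × ℝ → ℝ) (D : Set (Euc N × ℝ)) : Prop :=
  ContinuousOn u D ∧
  ∀ z ∈ D,
    DifferentiableAt ℝ (fun y => u (y, z.2)) z.1 ∧
    DifferentiableAt ℝ (fun t => u (z.1, t)) z.2 ∧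
    DifferentiableAt ℝ (fun y => pVF N p u (y, z.2)) z.1 ∧
    pLap N p u z - timeDeriv N u z = lam z * plusPowQ q (u z)

/-- The intrinsic scaling exponent `θ = p(1-q)/(p-1-q)`. -/
def thetaV (p q : ℝ) : ℝ := p * (1 - q) / (p - 1 - q)

/-- The intrinsic cylinder `Q_r(x₀,t₀) = B_r(x₀) × (t₀ - r^θ, t₀ + r^θ)`. -/
def cylQ (N : ℕ) (θ r : ℝ) (z0 : Euc N × ℝ) : Set (Euc N × ℝ) :=
  (ball z0.1 r) ×ˢ (Ioo (z0.2 - r ^ θ) (z0.2 + r ^ θ))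

/-- The lower cylinder `Q_r⁻(x₀,t₀) = B_r(x₀) × (t₀ - r^θ, t₀]`. -/
def cylQm (N : ℕ) (θ r : ℝ) (z0 : Euc N × ℝ) : Set (Euc N × ℝ) :=
  (ball z0.1 r) ×ˢ (Ioc (z0.2 - r ^ θ) z0.2)

/-- The upper cylinder `Q_r⁺(x₀,t₀) = B_r(x₀) × [t₀, t₀ + r^θ)`. -/
def cylQp (N : ℕ) (θ r : ℝ) (z0 : Euc N × ℝ) : Set (Euc N × ℝ) :=
  (ball z0.1 r) ×ˢ (Ico z0.2 (z0.2 + r ^ θ))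

/-- The parabolic boundary of `Q_r⁻(x₀,t₀)`:
`(closure(B_r) × {t₀ - r^θ}) ∪ (∂B_r × (t₀ - r^θ, t₀])`. -/
def parBdryQm (N : ℕ) (θ r : ℝ) (z0 : Euc N × ℝ) : Set (Euc N × ℝ) :=
  ((closedBall z0.1 r) ×ˢ ({z0.2 - r ^ θ} : Set ℝ)) ∪
    ((sphere z0.1 r) ×ˢ (Ioc (z0.2 - r ^ θ) z0.2))

/-- The class `𝔍 = 𝔍_p(λ₀,q)(Q₁)`: classical solutions `u` on `Q₁` (for some `λ₀` with
`m ≤ λ₀ ≤ M`) with `0 ≤ u ≤ 1`, `∂ₜ u ≥ 0` on `Q₁` and `u(0,0) = 0`. -/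
def memJ (N : ℕ) (p q m M : ℝ) (u : Euc N × ℝ → ℝ) : Prop :=
  ∃ lam : Euc N × ℝ → ℝ,
    (∀ z ∈ cylQ N (thetaV p q) 1 (0, 0), m ≤ lam z ∧ lam z ≤ M) ∧
    IsDCSol N p q lam u (cylQ N (thetaV p q) 1 (0, 0)) ∧
    (∀ z ∈ cylQ N (thetaV p q) 1 (0, 0), 0 ≤ u z ∧ u z ≤ 1) ∧
    (∀ z ∈ cylQ N (thetaV p q) 1 (0, 0), 0 ≤ timeDeriv N u z) ∧
    u (0, 0) = 0

/-- `S_r[u] = sup over Q_r⁻ of u` (cylinders centered at the origin). -/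
def Sr (N : ℕ) (p q r : ℝ) (u : Euc N × ℝ → ℝ) : ℝ :=
  sSup (u '' cylQm N (thetaV p q) r (0, 0))

/-!
As `∂ₜu ≥ 0`, every time slice `v = u(·, t)` satisfies `Δ_p v ≥ m v₊^q`, and at fixed `t` the growth
hypothesis reads `v = o(‖x‖^α)` with `α = p / (p - q - 1)`. The barrier `w = c ‖x - y‖^α` solves
`Δ_p w = Λ w₊^q` with `Λ` proportional to `c^(p-q-1)`, so `Λ < m` for small `c`. If `v` is positive
somewhere, then it is positive at some `y` with `∇v(y) ≠ 0`, since otherwise the flux would vanish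
on an open set where `Δ_p v > 0`. The maximum of `v - w` is positive, and it is attained away from
`y` because `∇w(y) = 0`. There `∇v = ∇w ≠ 0`, so the operator is nondegenerate and the second-order
condition gives `m v^q ≤ Δ_p v ≤ Δ_p w = Λ w^q < m v^q`, a contradiction.
-/

section QuadraticForms

open scoped Topology Gradient
open InnerProductSpace

variable {E : Type*} [NormedAddCommGroup E] [InnerProductSpace ℝ E]

theorem deriv_deriv_nonpos_of_isLocalMax {f : ℝ → ℝ} {x : ℝ} (hmax : IsLocalMax f x)
    (hf : ContinuousAt f x) : deriv (deriv f) x ≤ 0 := by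
  by_contra! hpos
  have hmin : IsLocalMin f x := isLocalMin_of_deriv_deriv_pos hpos hmax.deriv_eq_zero hf
  have hconst : f =ᶠ[𝓝 x] fun _ => f x := by
    filter_upwards [hmin, hmax] with y hge hle using le_antisymm hle hge
  have hzero : deriv (deriv f) x = 0 := by simpa using hconst.deriv.deriv_eq
  exact hpos.ne' hzero

theorem inner_apply_nonpos_of_isLocalMax [CompleteSpace E] {f : E → ℝ} {G : E → E} {H : E →L[ℝ] E}
    {x : E} (hmax : IsLocalMax f x) (hG : ∀ᶠ y in 𝓝 x, HasGradientAt f (G y) y)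
    (hH : HasFDerivAt G H x) (e : E) : inner ℝ e (H e) ≤ 0 := by
  have hline (s : ℝ) : HasDerivAt (fun s : ℝ => x + s • e) e s := by
    simpa using ((hasDerivAt_id s).smul_const e).const_add x
  have htendsto : Filter.Tendsto (fun s : ℝ => x + s • e) (𝓝 0) (𝓝 x) := by
    simpa [ContinuousAt] using (hline 0).continuousAt
  have hfirst : ∀ᶠ s in 𝓝 (0 : ℝ),
      HasDerivAt (fun s : ℝ => f (x + s • e)) (inner ℝ e (G (x + s • e))) s := by
    filter_upwards [htendsto.eventually hG] with s hs
    simpa [real_inner_comm, Function.comp_def] using hs.hasFDerivAt.comp_hasDerivAt s (hline s)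
  have hsecond : HasDerivAt (fun s : ℝ => inner ℝ e (G (x + s • e))) (inner ℝ e (H e)) 0 := by
    have hH' : HasFDerivAt G H (x + (0 : ℝ) • e) := by simpa using hH
    simpa [Function.comp_def] using
      (innerSL ℝ e).hasFDerivAt.comp_hasDerivAt 0 (hH'.comp_hasDerivAt 0 (hline 0))
  have hmax' : IsLocalMax (fun s : ℝ => f (x + s • e)) 0 := by
    filter_upwards [htendsto.eventually hmax] with s hs
    simpa using hs
  have hderiv : deriv (fun s : ℝ => f (x + s • e)) =ᶠ[𝓝 0] fun s => inner ℝ e (G (x + s • e)) :=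
    hfirst.mono fun s hs => hs.deriv
  simpa only [hderiv.deriv_eq, hsecond.deriv] using
    deriv_deriv_nonpos_of_isLocalMax hmax' hfirst.self_of_nhds.continuousAt

theorem trace_comp_nonpos_of_isPositive [FiniteDimensional ℝ E] {A H : E →L[ℝ] E}
    (hA : A.IsPositive) (hH : ∀ e, inner ℝ e (H e) ≤ 0) :
    LinearMap.trace ℝ E (A ∘L H).toLinearMap ≤ 0 := by
  obtain ⟨n, b, rfl⟩ := ContinuousLinearMap.isPositive_iff_eq_sum_rankOne.mp hA
  have hterm (i : Fin n) :
      LinearMap.trace ℝ E (rankOne ℝ (b i) (b i) ∘L H).toLinearMap = inner ℝ (b i) (H (b i)) := by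
    rw [ContinuousLinearMap.toLinearMap_comp, LinearMap.trace_comp_comm',
      ← ContinuousLinearMap.toLinearMap_comp, comp_rankOne, trace_rankOne]
  rw [ContinuousLinearMap.toLinearMap_comp, ContinuousLinearMap.toLinearMap_sum,
    ← Module.End.mul_eq_comp, Finset.sum_mul, map_sum]
  exact Finset.sum_nonpos fun i _ => (hterm i).trans_le (hH (b i))

end QuadraticForms

section RadialPower

open InnerProductSpace

theorem rpow_sub_two_mul_sq (β : ℝ) {r : ℝ} (hr : r ≠ 0) : r ^ (β - 2) * r ^ 2 = r ^ β := by
  rw [← Real.rpow_add_natCast hr]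
  norm_num

variable {E : Type*} [NormedAddCommGroup E] [InnerProductSpace ℝ E]

/-- The radial power field `x ↦ ‖x‖^β x`; it vanishes at the origin for every `β`. -/
def radialPow (β : ℝ) (x : E) : E := ‖x‖ ^ β • x

/-- The derivative `‖x‖^β id + β ‖x‖^(β-2) x ⊗ x` of `radialPow β` at a point `x ≠ 0`. -/
def radialPowDeriv (β : ℝ) (x : E) : E →L[ℝ] E :=
  ‖x‖ ^ β • ContinuousLinearMap.id ℝ E + (β * ‖x‖ ^ (β - 2)) • rankOne ℝ x x

@[simp]
theorem radialPow_zero_right (β : ℝ) : radialPow β (0 : E) = 0 := smul_zero _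

theorem radialPow_ne_zero (β : ℝ) {x : E} (hx : x ≠ 0) : radialPow β x ≠ 0 :=
  smul_ne_zero (Real.rpow_pos_of_pos (norm_pos_iff.mpr hx) β).ne' hx

theorem radialPow_smul (β : ℝ) {k : ℝ} (hk : 0 < k) (x : E) :
    radialPow β (k • x) = k ^ (β + 1) • radialPow β x := by
  rw [radialPow, radialPow, norm_smul, Real.norm_of_nonneg hk.le,
    Real.mul_rpow hk.le (norm_nonneg x), Real.rpow_add_one hk.ne', smul_smul, smul_smul]
  congr 1
  ring

theorem radialPow_radialPow (β γ : ℝ) (x : E) :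
    radialPow γ (radialPow β x) = radialPow (β + γ * (β + 1)) x := by
  rcases eq_or_ne x 0 with rfl | hx
  · simp
  have hx0 : 0 < ‖x‖ := norm_pos_iff.mpr hx
  rw [radialPow.eq_1 β, radialPow_smul γ (by positivity), radialPow, radialPow, smul_smul,
    ← Real.rpow_mul hx0.le, ← Real.rpow_add hx0]
  ring_nf

theorem hasFDerivAt_radialPow (β : ℝ) {x : E} (hx : x ≠ 0) :
    HasFDerivAt (radialPow β) (radialPowDeriv β x) x := by
  have hnorm : HasFDerivAt (fun y : E => ‖y‖ ^ β) ((β * ‖x‖ ^ (β - 2)) • innerSL ℝ x) x := by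
    apply HasStrictFDerivAt.hasFDerivAt
    convert! (hasStrictFDerivAt_norm_sq x).rpow_const (p := β / 2) (by simp [hx]) using 0
    simp_rw [← Real.rpow_natCast_mul (norm_nonneg _), ← Nat.cast_smul_eq_nsmul ℝ, smul_smul]
    ring_nf
  convert! hnorm.fun_smul (hasFDerivAt_id x) using 1
  ext e
  simp [radialPowDeriv, mul_smul]

theorem isPositive_radialPowDeriv {β : ℝ} (hβ : -1 ≤ β) {x : E} (hx : x ≠ 0) :
    (radialPowDeriv β x).IsPositive := by
  refine ⟨?_, fun e => ?_⟩
  · intro e f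
    simp only [radialPowDeriv, ContinuousLinearMap.coe_coe, add_apply, smul_apply,
      ContinuousLinearMap.id_apply, rankOne_apply, inner_add_left, inner_smul_left,
      Real.ringHom_apply, inner_add_right, inner_smul_right, real_inner_comm e x]
    ring
  have hquad : inner ℝ (radialPowDeriv β x e) e
      = ‖x‖ ^ (β - 2) * (‖x‖ ^ 2 * ‖e‖ ^ 2 + β * inner ℝ x e ^ 2) := by
    simp only [radialPowDeriv, ← rpow_sub_two_mul_sq β (norm_ne_zero_iff.mpr hx), add_apply,
      smul_apply, ContinuousLinearMap.id_apply, rankOne_apply, inner_add_left, inner_smul_left,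
      Real.ringHom_apply, real_inner_self_eq_norm_sq]
    ring
  have hcauchy : inner ℝ x e ^ 2 ≤ ‖x‖ ^ 2 * ‖e‖ ^ 2 := by
    rw [← mul_pow]
    exact sq_le_sq' (neg_le_of_abs_le (abs_real_inner_le_norm x e)) (real_inner_le_norm x e)
  change 0 ≤ inner ℝ (radialPowDeriv β x e) e
  rw [hquad]
  have : 0 ≤ ‖x‖ ^ 2 * ‖e‖ ^ 2 + β * inner ℝ x e ^ 2 := by nlinarith [sq_nonneg (inner ℝ x e)]
  positivity

theorem trace_radialPowDeriv [FiniteDimensional ℝ E] (β : ℝ) {x : E} (hx : x ≠ 0) :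
    LinearMap.trace ℝ E (radialPowDeriv β x).toLinearMap
      = (Module.finrank ℝ E + β) * ‖x‖ ^ β := by
  simp only [radialPowDeriv, ContinuousLinearMap.toLinearMap_add,
    ContinuousLinearMap.toLinearMap_smul, ContinuousLinearMap.coe_id, map_add, map_smul,
    LinearMap.trace_id, smul_eq_mul, trace_rankOne, real_inner_self_eq_norm_sq]
  linear_combination β * rpow_sub_two_mul_sq β (norm_ne_zero_iff.mpr hx)

end RadialPower

section PLaplacian

open scoped Topology Gradient

variable {E : Type*} [NormedAddCommGroup E] [InnerProductSpace ℝ E] {p : ℝ} {v w : E → ℝ} {x : E}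

section Complete

variable [CompleteSpace E]

/-- The flux `‖∇v‖^(p-2) ∇v` of the `p`-Laplacian. -/
def pFlux (p : ℝ) (v : E → ℝ) (x : E) : E := radialPow (p - 2) (∇ v x)

/-- The `p`-Laplacian of a function of the space variable, as the trace of the derivative of its
flux. -/
def pLaplacian (p : ℝ) (v : E → ℝ) (x : E) : ℝ :=
  LinearMap.trace ℝ E (fderiv ℝ (pFlux p v) x).toLinearMap

theorem radialPow_pFlux (hp : 1 < p) (v : E → ℝ) (x : E) :
    radialPow ((2 - p) / (p - 1)) (pFlux p v x) = ∇ v x := by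
  have hexp : p - 2 + (2 - p) / (p - 1) * (p - 2 + 1) = 0 := by
    field_simp [(sub_pos.mpr hp).ne']
    ring
  rw [pFlux, radialPow_radialPow, hexp, radialPow, Real.rpow_zero, one_smul]

theorem differentiableAt_gradient_of_pFlux (hp : 1 < p) (hv : DifferentiableAt ℝ (pFlux p v) x)
    (hx : ∇ v x ≠ 0) : DifferentiableAt ℝ (∇ v) x := by
  have hinv : ∇ v = radialPow ((2 - p) / (p - 1)) ∘ pFlux p v :=
    funext fun y => (radialPow_pFlux hp v y).symm
  rw [hinv]
  exact (hasFDerivAt_radialPow _ (radialPow_ne_zero _ hx)).differentiableAt.comp x hv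

theorem fderiv_pFlux (hv : DifferentiableAt ℝ (∇ v) x) (hx : ∇ v x ≠ 0) :
    fderiv ℝ (pFlux p v) x = radialPowDeriv (p - 2) (∇ v x) ∘L fderiv ℝ (∇ v) x :=
  ((hasFDerivAt_radialPow (p - 2) hx).comp x hv.hasFDerivAt).fderiv

theorem gradient_eq_of_isLocalMax_sub (hv : DifferentiableAt ℝ v x) (hw : DifferentiableAt ℝ w x)
    (hmax : IsLocalMax (v - w) x) : ∇ v x = ∇ w x := by
  have hfderiv : fderiv ℝ v x = fderiv ℝ w x := by
    rw [← sub_eq_zero, ← fderiv_sub hv hw, hmax.fderiv_eq_zero]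
  rw [gradient, gradient, hfderiv]

end Complete

-- At the contact point both linearised operators are the trace against the same positive matrix.
theorem pLaplacian_le_of_isLocalMax_sub [FiniteDimensional ℝ E] (hp : 1 < p)
    (hv : ∀ᶠ y in 𝓝 x, DifferentiableAt ℝ v y) (hw : ∀ᶠ y in 𝓝 x, DifferentiableAt ℝ w y)
    (hvp : DifferentiableAt ℝ (pFlux p v) x) (hwp : DifferentiableAt ℝ (pFlux p w) x)
    (hx : ∇ w x ≠ 0) (hmax : IsLocalMax (v - w) x) : pLaplacian p v x ≤ pLaplacian p w x := by
  have hgrad : ∇ v x = ∇ w x :=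
    gradient_eq_of_isLocalMax_sub hv.self_of_nhds hw.self_of_nhds hmax
  have hx' : ∇ v x ≠ 0 := hgrad ▸ hx
  have hdv := differentiableAt_gradient_of_pFlux hp hvp hx'
  have hdw := differentiableAt_gradient_of_pFlux hp hwp hx
  have hsub : ∀ᶠ y in 𝓝 x, HasGradientAt (v - w) ((∇ v - ∇ w) y) y := by
    filter_upwards [hv, hw] with y hvy hwy
    rw [hasGradientAt_iff_hasFDerivAt, Pi.sub_apply, map_sub]
    exact hvy.hasGradientAt.hasFDerivAt.sub hwy.hasGradientAt.hasFDerivAt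
  have hhess := inner_apply_nonpos_of_isLocalMax hmax hsub (hdv.hasFDerivAt.sub hdw.hasFDerivAt)
  have htrace := trace_comp_nonpos_of_isPositive
    (isPositive_radialPowDeriv (by linarith : -1 ≤ p - 2) hx) hhess
  rw [ContinuousLinearMap.comp_sub, ContinuousLinearMap.toLinearMap_sub, map_sub] at htrace
  rw [pLaplacian, pLaplacian, fderiv_pFlux hdv hx', fderiv_pFlux hdw hx, hgrad]
  exact sub_nonpos.mp htrace

end PLaplacian

section Barrier

open scoped Gradient
open InnerProductSpace

variable {E : Type*} [NormedAddCommGroup E] {p q c c' α : ℝ}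

/-- The radial barrier `c ‖x - y‖^α` centred at `y`. -/
def radialBarrier (c α : ℝ) (y x : E) : ℝ := c * ‖x - y‖ ^ α

@[simp]
theorem radialBarrier_self (hα : α ≠ 0) (y : E) : radialBarrier c α y y = 0 := by
  simp [radialBarrier, hα]

theorem eventually_mul_rpow_le_radialBarrier (hα : 0 < α) (hc : 0 ≤ c) (hcc' : c < c') (y : E) :
    ∀ᶠ x in Bornology.cobounded E, c * ‖x‖ ^ α ≤ radialBarrier c' α y x := by
  have hc' : 0 < c' := hc.trans_lt hcc'
  set r : ℝ := (c / c') ^ α⁻¹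
  have hr0 : 0 ≤ r := by positivity
  have hr1 : r < 1 := Real.rpow_lt_one (by positivity) ((div_lt_one hc').mpr hcc') (by positivity)
  have hrα : c' * r ^ α = c := by
    rw [Real.rpow_inv_rpow (by positivity) hα.ne', mul_div_cancel₀ _ hc'.ne']
  filter_upwards [tendsto_norm_cobounded_atTop.eventually_ge_atTop (‖y‖ / (1 - r))] with x hx
  have hnorm : r * ‖x‖ ≤ ‖x - y‖ := by
    rw [div_le_iff₀ (sub_pos.mpr hr1)] at hx
    linarith [norm_sub_norm_le x y]
  calc c * ‖x‖ ^ α = c' * (r * ‖x‖) ^ α := by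
        rw [Real.mul_rpow hr0 (norm_nonneg x), ← mul_assoc, hrα]
    _ ≤ radialBarrier c' α y x := by
        unfold radialBarrier
        gcongr

theorem exists_forall_sub_radialBarrier_le [ProperSpace E] {v : E → ℝ} {y : E} (hα : 0 < α)
    (hc : 0 ≤ c) (hcc' : c < c') (hv : Continuous v) (hy : 0 ≤ v y)
    (hgrowth : ∀ᶠ x in Bornology.cobounded E, v x ≤ c * ‖x‖ ^ α) :
    ∃ x₀, ∀ x, (v - radialBarrier c' α y) x ≤ (v - radialBarrier c' α y) x₀ := by
  have hcont : Continuous (v - radialBarrier c' α y) := by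
    have hpow : Continuous fun x : E => ‖x - y‖ ^ α :=
      (continuous_id.sub continuous_const).norm.rpow_const fun _ => Or.inr hα.le
    exact hv.sub (continuous_const.mul hpow)
  refine hcont.exists_forall_ge' y ?_
  rw [← Metric.cobounded_eq_cocompact]
  filter_upwards [hgrowth, eventually_mul_rpow_le_radialBarrier hα hc hcc' y] with x hvx hwx
  simp only [Pi.sub_apply, radialBarrier_self hα.ne']
  linarith

variable [InnerProductSpace ℝ E]

section Flux

variable [CompleteSpace E]

theorem hasGradientAt_radialBarrier (hα : 1 < α) (c : ℝ) (y x : E) :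
    HasGradientAt (radialBarrier c α y) ((c * α) • radialPow (α - 2) (x - y)) x := by
  rw [hasGradientAt_iff_hasFDerivAt]
  convert! ((hasFDerivAt_comp_sub y).mpr (hasFDerivAt_norm_rpow (x - y) hα)).const_mul c using 1
  ext e
  simp only [radialPow, map_smul, smul_apply, toDual_apply_apply, smul_eq_mul,
    coe_innerSL_apply]
  ring

theorem gradient_radialBarrier (hα : 1 < α) (c : ℝ) (y x : E) :
    ∇ (radialBarrier c α y) x = (c * α) • radialPow (α - 2) (x - y) :=
  (hasGradientAt_radialBarrier hα c y x).gradient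

theorem gradient_radialBarrier_self (hα : 1 < α) (c : ℝ) (y : E) :
    ∇ (radialBarrier c α y) y = 0 := by
  rw [gradient_radialBarrier hα, sub_self, radialPow_zero_right, smul_zero]

theorem gradient_radialBarrier_ne_zero (hα : 1 < α) (hc : 0 < c) {x y : E} (hxy : x ≠ y) :
    ∇ (radialBarrier c α y) x ≠ 0 := by
  rw [gradient_radialBarrier hα]
  exact smul_ne_zero (by positivity) (radialPow_ne_zero _ (sub_ne_zero.mpr hxy))

theorem pFlux_radialBarrier (hα : 1 < α) (hc : 0 < c) (y : E) :
    pFlux p (radialBarrier c α y) =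
      fun x => (c * α) ^ (p - 1) • radialPow ((α - 1) * (p - 1) - 1) (x - y) := by
  ext1 x
  rw [pFlux, gradient_radialBarrier hα, radialPow_smul _ (by positivity),
    radialPow_radialPow]
  ring_nf

theorem hasFDerivAt_pFlux_radialBarrier (hα : 1 < α) (hc : 0 < c) {x y : E} (hxy : x ≠ y) :
    HasFDerivAt (pFlux p (radialBarrier c α y))
      ((c * α) ^ (p - 1) • radialPowDeriv ((α - 1) * (p - 1) - 1) (x - y)) x := by
  rw [pFlux_radialBarrier hα hc]
  exact ((hasFDerivAt_comp_sub y).mpr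
    (hasFDerivAt_radialPow _ (sub_ne_zero.mpr hxy))).fun_const_smul _

end Flux

theorem exists_contact_radialBarrier [ProperSpace E] {v : E → ℝ} {y : E} (hα : 1 < α)
    (hc : 0 ≤ c) (hcc' : c < c') (hv : Differentiable ℝ v) (hy : 0 < v y) (hgrad : ∇ v y ≠ 0)
    (hgrowth : ∀ᶠ x in Bornology.cobounded E, v x ≤ c * ‖x‖ ^ α) :
    ∃ x₀ ≠ y, IsLocalMax (v - radialBarrier c' α y) x₀ ∧ radialBarrier c' α y x₀ < v x₀ := by
  have hα0 : 0 < α := zero_lt_one.trans hα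
  obtain ⟨x₀, hx₀⟩ := exists_forall_sub_radialBarrier_le hα0 hc hcc' hv.continuous hy.le hgrowth
  have hmax : IsLocalMax (v - radialBarrier c' α y) x₀ := .of_forall hx₀
  refine ⟨x₀, ?_, hmax, ?_⟩
  · rintro rfl
    refine hgrad ((gradient_eq_of_isLocalMax_sub (hv _) ?_ hmax).trans
      (gradient_radialBarrier_self hα c' _))
    exact (hasGradientAt_radialBarrier hα c' _ _).differentiableAt
  · have hle := hx₀ y
    simp only [Pi.sub_apply, radialBarrier_self hα0.ne'] at hle
    linarith

/-- The homogeneity exponent `α = p / (p - q - 1)`, for which `‖x‖^α` makes the two sides of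
`Δ_p w = m w₊^q` scale alike. -/
def deadCoreExp (p q : ℝ) : ℝ := p / (p - q - 1)

/-- The constant `Λ` in `Δ_p w = Λ w₊^q` for the barrier `w = c ‖x - y‖^α`, `α = deadCoreExp p q`,
in dimension `n`. -/
def barrierRate (n : ℕ) (p q c : ℝ) : ℝ :=
  c ^ (p - q - 1) * (deadCoreExp p q ^ (p - 1) * (n + deadCoreExp p q * q))

theorem one_lt_deadCoreExp (hq : 0 ≤ q) (hpq : q < p - 1) : 1 < deadCoreExp p q := by
  rw [deadCoreExp, one_lt_div] <;> linarith

theorem deadCoreExp_sub_one_mul (hpq : q < p - 1) :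
    (deadCoreExp p q - 1) * (p - 1) - 1 = deadCoreExp p q * q := by
  have hs : p - q - 1 ≠ 0 := by linarith
  rw [deadCoreExp]
  field_simp
  ring

theorem barrierRate_nonneg (n : ℕ) (hq : 0 ≤ q) (hpq : q < p - 1) (hc : 0 ≤ c) :
    0 ≤ barrierRate n p q c := by
  have hα := one_lt_deadCoreExp hq hpq
  unfold barrierRate
  positivity

theorem barrierRate_zero (n : ℕ) (hpq : q < p - 1) : barrierRate n p q 0 = 0 := by
  have hs : p - q - 1 ≠ 0 := by linarith
  simp [barrierRate, Real.zero_rpow hs]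

theorem exists_gt_barrierRate_lt {n : ℕ} {m : ℝ} (hpq : q < p - 1)
    (hc : barrierRate n p q c < m) : ∃ c' > c, barrierRate n p q c' < m := by
  have hcont : Continuous (barrierRate n p q) :=
    (Real.continuous_rpow_const (by linarith)).mul continuous_const
  exact (hcont.continuousAt.eventually (gt_mem_nhds hc)).exists_gt

theorem pLaplacian_radialBarrier [FiniteDimensional ℝ E] (hq : 0 ≤ q) (hpq : q < p - 1) (hc : 0 < c)
    {x y : E} (hxy : x ≠ y) :
    pLaplacian p (radialBarrier c (deadCoreExp p q) y) x
      = barrierRate (Module.finrank ℝ E) p q c * radialBarrier c (deadCoreExp p q) y x ^ q := by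
  have hα := one_lt_deadCoreExp hq hpq
  have hcpow : c ^ (p - 1) = c ^ (p - q - 1) * c ^ q := by
    rw [← Real.rpow_add hc]
    ring_nf
  rw [pLaplacian, (hasFDerivAt_pFlux_radialBarrier hα hc hxy).fderiv,
    ContinuousLinearMap.toLinearMap_smul, map_smul, trace_radialPowDeriv _ (sub_ne_zero.mpr hxy),
    deadCoreExp_sub_one_mul hpq, radialBarrier, barrierRate, Real.mul_rpow hc.le (by positivity),
    Real.mul_rpow hc.le (by positivity), ← Real.rpow_mul (norm_nonneg _), hcpow, smul_eq_mul]
  ring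

end Barrier

section Subsolution

open scoped Topology Gradient

variable {E : Type*} [NormedAddCommGroup E] [InnerProductSpace ℝ E] [FiniteDimensional ℝ E]
  {p q m c : ℝ} {v : E → ℝ}

/-- Classical subsolutions of the stationary dead-core equation, `Δ_p v ≥ m v₊^q`; where `v ≤ 0`
nothing is required of `Δ_p v`. -/
structure IsDeadCoreSubsolution (p q m : ℝ) (v : E → ℝ) : Prop where
  differentiable : Differentiable ℝ v
  differentiable_pFlux : Differentiable ℝ (pFlux p v)
  le_pLaplacian : ∀ x, 0 < v x → m * v x ^ q ≤ pLaplacian p v x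

namespace IsDeadCoreSubsolution

theorem exists_pos_gradient_ne_zero (hv : IsDeadCoreSubsolution p q m v) (hm : 0 < m) {x : E}
    (hx : 0 < v x) : ∃ y, 0 < v y ∧ ∇ v y ≠ 0 := by
  by_contra! hcrit
  have hflux : pFlux p v =ᶠ[𝓝 x] fun _ => 0 := by
    filter_upwards [hv.differentiable.continuous.continuousAt.eventually (lt_mem_nhds hx)] with y hy
    rw [pFlux, hcrit y hy, radialPow_zero_right]
  have hzero : pLaplacian p v x = 0 := by simp [pLaplacian, hflux.fderiv_eq]
  have hle := hv.le_pLaplacian x hx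
  rw [hzero] at hle
  exact hle.not_gt (by positivity)

theorem nonpos_of_growth (hv : IsDeadCoreSubsolution p q m v) (hq : 0 ≤ q)
    (hpq : q < p - 1) (hc : 0 ≤ c) (hcm : barrierRate (Module.finrank ℝ E) p q c < m)
    (hgrowth : ∀ᶠ x in Bornology.cobounded E, v x ≤ c * ‖x‖ ^ deadCoreExp p q) (x : E) :
    v x ≤ 0 := by
  by_contra! hx
  have hα := one_lt_deadCoreExp hq hpq
  have hm : 0 < m := (barrierRate_nonneg _ hq hpq hc).trans_lt hcm
  obtain ⟨y, hvy, hgrad⟩ := hv.exists_pos_gradient_ne_zero hm hx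
  obtain ⟨c', hcc', hcm'⟩ := exists_gt_barrierRate_lt hpq hcm
  have hc' : 0 < c' := hc.trans_lt hcc'
  set w := radialBarrier c' (deadCoreExp p q) y with hw
  have hdw : Differentiable ℝ w :=
    fun z => (hasGradientAt_radialBarrier hα c' y z).differentiableAt
  obtain ⟨x₀, hx₀y, hmax, hwv⟩ :=
    exists_contact_radialBarrier hα hc hcc' hv.differentiable hvy hgrad hgrowth
  have hw0 : 0 ≤ w x₀ := by
    rw [hw, radialBarrier]
    positivity
  have hv0 : 0 < v x₀ := hw0.trans_lt hwv
  refine lt_irrefl (m * v x₀ ^ q) ?_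
  calc m * v x₀ ^ q ≤ pLaplacian p v x₀ := hv.le_pLaplacian x₀ hv0
    _ ≤ pLaplacian p w x₀ :=
        pLaplacian_le_of_isLocalMax_sub (by linarith) (.of_forall hv.differentiable)
          (.of_forall hdw) (hv.differentiable_pFlux x₀)
          (hasFDerivAt_pFlux_radialBarrier hα hc' hx₀y).differentiableAt
          (gradient_radialBarrier_ne_zero hα hc' hx₀y) hmax
    _ = barrierRate (Module.finrank ℝ E) p q c' * w x₀ ^ q :=
        pLaplacian_radialBarrier hq hpq hc' hx₀y
    _ ≤ barrierRate (Module.finrank ℝ E) p q c' * v x₀ ^ q := by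
        have := barrierRate_nonneg (Module.finrank ℝ E) hq hpq hc'.le
        gcongr
    _ < m * v x₀ ^ q := by gcongr

end IsDeadCoreSubsolution

end Subsolution

section TimeSlices

variable {N : ℕ} {p q m c : ℝ} {lam u : Euc N × ℝ → ℝ}

theorem plusPowQ_of_pos {s : ℝ} (hs : 0 < s) : plusPowQ q s = s ^ q := by
  rw [plusPowQ, if_pos hs, max_eq_left hs.le]

theorem IsDCSol.isDeadCoreSubsolution_slice (hsol : IsDCSol N p q lam u univ)
    (hlam : ∀ z, m ≤ lam z) (hmono : ∀ z, 0 ≤ timeDeriv N u z) (t : ℝ) :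
    IsDeadCoreSubsolution p q m fun x => u (x, t) where
  differentiable x := (hsol.2 (x, t) (mem_univ _)).1
  differentiable_pFlux x := (hsol.2 (x, t) (mem_univ _)).2.2.1
  le_pLaplacian x hx := by
    have hpde : pLap N p u (x, t) - timeDeriv N u (x, t) = lam (x, t) * u (x, t) ^ q := by
      rw [(hsol.2 (x, t) (mem_univ _)).2.2.2, plusPowQ_of_pos hx]
    calc m * u (x, t) ^ q ≤ lam (x, t) * u (x, t) ^ q := by
          have := hlam (x, t)
          gcongr
      _ ≤ pLap N p u (x, t) := by linarith [hmono (x, t)]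

theorem eventually_slice_le_of_intrinsic_growth {E : Type*} [NormedAddCommGroup E]
    {f : E × ℝ → ℝ} {ε R a α : ℝ}
    (hf : ∀ z : E × ℝ, R ≤ max ‖z.1‖ (|z.2| ^ a) → f z ≤ ε * max ‖z.1‖ (|z.2| ^ a) ^ α) (t : ℝ) :
    ∀ᶠ x in Bornology.cobounded E, f (x, t) ≤ ε * ‖x‖ ^ α := by
  filter_upwards [tendsto_norm_cobounded_atTop.eventually_ge_atTop (max R (|t| ^ a))] with x hx
  have hmax : max ‖x‖ (|t| ^ a) = ‖x‖ := max_eq_left ((le_max_right _ _).trans hx)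
  have hfx := hf (x, t)
  rw [hmax] at hfx
  exact hfx ((le_max_left _ _).trans hx)

theorem liouville_dead_core_general (hq : 0 ≤ q) (hpq : q < p - 1) (hc : 0 ≤ c)
    (hcm : barrierRate N p q c < m) (hlam : ∀ z, m ≤ lam z) (hsol : IsDCSol N p q lam u univ)
    (hmono : ∀ z, 0 ≤ timeDeriv N u z)
    (hgrowth : ∀ t, ∀ᶠ x in Bornology.cobounded (Euc N), u (x, t) ≤ c * ‖x‖ ^ deadCoreExp p q)
    (z : Euc N × ℝ) : u z ≤ 0 :=
  (hsol.isDeadCoreSubsolution_slice hlam hmono z.2).nonpos_of_growth hq hpq hc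
    (by rwa [finrank_euclideanSpace_fin]) (hgrowth z.2) z.1

end TimeSlices

/-- **Theorem 5.3 (Liouville-type theorem).** -/
theorem liouville_dead_core
    (N : ℕ) (hN : 1 ≤ N) (p q m M : ℝ)
    (hp : 2 ≤ p) (hq0 : 0 ≤ q) (hq1 : q < 1) (hm : 0 < m) (hmM : m ≤ M)
    (lam u : Euc N × ℝ → ℝ)
    (hlam : ∀ z : Euc N × ℝ, m ≤ lam z ∧ lam z ≤ M)
    (hsol : IsDCSol N p q lam u univ)
    (hnn : ∀ z : Euc N × ℝ, 0 ≤ u z)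
    (hmono : ∀ z : Euc N × ℝ, 0 ≤ timeDeriv N u z)
    (h0 : u (0, 0) = 0)
    (hgrowth : ∀ ε : ℝ, 0 < ε → ∃ R : ℝ, 0 < R ∧
      ∀ z : Euc N × ℝ, R ≤ max ‖z.1‖ (|z.2| ^ (1 / thetaV p q)) →
        u z ≤ ε * max ‖z.1‖ (|z.2| ^ (1 / thetaV p q)) ^ (p / (p - q - 1))) :
    ∀ z : Euc N × ℝ, u z = 0 := by
  have hpq : q < p - 1 := by linarith
  obtain ⟨c, hc, hcm⟩ :=
    exists_gt_barrierRate_lt (n := N) hpq ((barrierRate_zero N hpq).trans_lt hm)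
  obtain ⟨R, -, hR⟩ := hgrowth c hc
  exact fun z => (liouville_dead_core_general hq0 hpq hc.le hcm (fun z => (hlam z).1) hsol hmono
    (eventually_slice_le_of_intrinsic_growth hR) z).antisymm (hnn z)
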